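/- Let n ≥ 2, let x_1,…,x_{n+1} ∈ P (respectively y_1,…,y_{n+1} ∈ P) be pairwise distinct points ordered anticlockwise, and let a, b ∈ P. Suppose that exactly the points x_1,…,x_l and y_1,…,y_k lie on the right side of the oriented chord from a to b (where lying on the right side includes possibly coinciding with a or b), while the remaining x_i and y_j lie strictly on the left side, and let u be any point strictly on the left side of this chord. Then, with respect to the swapping bracket, {ab, Δ((x_1,…,x_{n+1}),(y_1,…,y_{n+1}))} = Σ_{d=1}^{l} J(ab, x_d u)·x_d b·Δ((x_1,…,x_{d−1}, a, x_{d+1},…,x_{n+1}),(y_1,…,y_{n+1})) + Σ_{d=1}^{k} J(ab, u y_d)·a y_d·Δ((x_1,…,x_{n+1}),(y_1,…,y_{d−1}, b, y_{d+1},…,y_{n+1})). -/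

import Mathlib

noncomputable section

open scoped Classical
open MvPolynomial

set_option maxHeartbeats 1000000
set_option synthInstance.maxHeartbeats 400000

instance fact01 : Fact ((0:ℝ) < 1) := ⟨one_pos⟩

/-- The circle, modelled as `ℝ/ℤ`. -/
abbrev Circle1 : Type := AddCircle (1:ℝ)

/-- The coordinate in `[0,1)` of the point `x` of the circle obtained after removing the
point `o` and identifying the complement of `o` with an interval. -/
def coordAt (o x : Circle1) : ℝ := ((AddCircle.equivIco 1 0) (x - o) : ℝ)

/-- The sign `△` of a real number, as a rational number in `{-1, 0, 1}`. -/
def sgnQ (a : ℝ) : ℚ := if a < 0 then -1 else if a = 0 then 0 else 1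

/-- The linking number `J(rx, sy)` of the chords `rx` and `sy`, computed using the
cut point `o`. -/
def linkingAt (o r x s y : Circle1) : ℚ :=
  (1/2) * (sgnQ (coordAt o r - coordAt o x) * sgnQ (coordAt o r - coordAt o y)
        * sgnQ (coordAt o y - coordAt o x)
      - sgnQ (coordAt o r - coordAt o x) * sgnQ (coordAt o r - coordAt o s)
        * sgnQ (coordAt o s - coordAt o x))

lemma circle1_infinite : Infinite Circle1 := by
  have h : (Set.Ico (0:ℝ) (0+1)).Infinite := Set.Ico_infinite (by norm_num)
  haveI := h.to_subtype
  exact Infinite.of_injective (fun q : Set.Ico (0:ℝ) (0+1) => (AddCircle.equivIco 1 0).symm q)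
    ((AddCircle.equivIco 1 0).symm.injective)

lemma exists_cut (r x s y : Circle1) :
    ∃ o : Circle1, o ≠ r ∧ o ≠ x ∧ o ≠ s ∧ o ≠ y := by
  haveI : Infinite Circle1 := circle1_infinite
  have hfin : ({r, x, s, y} : Set Circle1).Finite :=
    (((Set.finite_singleton y).insert s).insert x).insert r
  obtain ⟨o, ho⟩ := hfin.infinite_compl.nonempty
  simp only [Set.mem_compl_iff, Set.mem_insert_iff, Set.mem_singleton_iff, not_or] at ho
  exact ⟨o, ho.1, ho.2.1, ho.2.2.1, ho.2.2.2⟩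

/-- The linking number `J(rx, sy)` of the chords `rx` and `sy` (computed with respect to
some cut point distinct from the four points; by the independence of the choice this is
the linking number). -/
def linkQ (r x s y : Circle1) : ℚ := linkingAt (exists_cut r x s y).choose r x s y

/-- The set of points of the circle `l`, listed in anticlockwise (cyclic) order:
there is a cut point `o` avoiding them such that the induced coordinates are
strictly increasing along the list. -/
def AnticlockwiseList (l : List Circle1) : Prop :=
  ∃ o : Circle1, (∀ p ∈ l, p ≠ o) ∧ (l.map (coordAt o)).Chain' (· < ·)

/-- Index type for the generators `xy` of the swapping ring of `P`
(one generator for each ordered pair of distinct points; the generators `xx`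
are identified with `0`). -/
abbrev SwapIdx (P : Set Circle1) : Type := {q : (↥P) × (↥P) // q.1 ≠ q.2}

/-- The swapping ring `Z(P)`: the polynomial ring over `K` on the generators `xy`,
`x ≠ y ∈ P` (this realizes the commutative ring generated by all ordered pairs `xy`
subject to the relations `xx = 0`). -/
abbrev SwapRing (K : Type) [Field K] (P : Set Circle1) : Type := MvPolynomial (SwapIdx P) K

/-- The generator `xy` of the swapping ring (equal to `0` when `x = y`). -/
def gen (K : Type) [Field K] (P : Set Circle1) (x y : ↥P) : SwapRing K P :=
  if h : x ≠ y then MvPolynomial.X (⟨(x, y), h⟩ : SwapIdx P) else 0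

/-- The value of the `(c1,c2)`-swapping bracket on two generators `rx` and `sy`:
`J(rx,sy) • (c1 • ry·sx + c2 • rx·sy)`. -/
def genBr (K : Type) [Field K] (P : Set Circle1) (c1 c2 : K) (g g' : SwapIdx P) :
    SwapRing K P :=
  ((linkQ g.1.1.1 g.1.2.1 g'.1.1.1 g'.1.2.1 : ℚ) : K) •
    (c1 • (gen K P g.1.1 g'.1.2 * gen K P g'.1.1 g.1.2)
      + c2 • (gen K P g.1.1 g.1.2 * gen K P g'.1.1 g'.1.2))

/-- The `(c1,c2)`-swapping bracket on `Z(P)`: the biderivation extending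
`{rx, sy} = J(rx,sy)·(c1·ry·sx + c2·rx·sy)` by the Leibniz rule in each argument.
The swapping bracket is the case `c1 = 1, c2 = 0`. -/
def swapBr (K : Type) [Field K] (P : Set Circle1) (c1 c2 : K) (a b : SwapRing K P) :
    SwapRing K P :=
  (MvPolynomial.mkDerivation K
    (fun g : SwapIdx P => (MvPolynomial.mkDerivation K (genBr K P c1 c2 g)) b)) a

/-- `Δ((x_1,…,x_m),(y_1,…,y_m)) = det (x_i y_j)` in the swapping ring. -/
def Dmat (K : Type) [Field K] (P : Set Circle1) (m : ℕ) (xs ys : Fin m → ↥P) :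
    SwapRing K P :=
  Matrix.det (Matrix.of fun i j => gen K P (xs i) (ys j))

/-- The ideal `R_n(P)` of `Z(P)` generated by all `(n+1)×(n+1)` determinants
`Δ((x_1,…,x_{n+1}),(y_1,…,y_{n+1}))`. -/
def Rideal (K : Type) [Field K] (P : Set Circle1) (n : ℕ) : Ideal (SwapRing K P) :=
  Ideal.span {D : SwapRing K P | ∃ xs ys : Fin (n+1) → ↥P, D = Dmat K P (n+1) xs ys}

/-- The rank `n` swapping ring `Z_n(P) = Z(P)/R_n(P)`. -/
abbrev ZnRing (K : Type) [Field K] (P : Set Circle1) (n : ℕ) : Type :=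
  SwapRing K P ⧸ Rideal K P n

/-- The quotient map `Z(P) → Z_n(P)`. -/
def toZn (K : Type) [Field K] (P : Set Circle1) (n : ℕ) :
    SwapRing K P →+* ZnRing K P n := Ideal.Quotient.mk (Rideal K P n)

/-- The total fraction ring `Q_n(P)` of the rank `n` swapping ring. -/
abbrev QnRing (K : Type) [Field K] (P : Set Circle1) (n : ℕ) : Type :=
  Localization (nonZeroDivisors (ZnRing K P n))

/-- The canonical map `Z(P) → Q_n(P)`. -/
def toQn (K : Type) [Field K] (P : Set Circle1) (n : ℕ) :
    SwapRing K P →+* QnRing K P n :=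
  (algebraMap (ZnRing K P n) (QnRing K P n)).comp (toZn K P n)

/-- `Bq` is the extension to the total fraction ring `Q_n(P)` of the `(c1,c2)`-swapping
bracket of the rank `n` swapping algebra: it agrees with the swapping bracket on the image
of `Z(P)` and satisfies the Leibniz rule in both arguments (these properties determine it
uniquely). -/
def IsQnBracket (K : Type) [Field K] (P : Set Circle1) (n : ℕ) (c1 c2 : K)
    (Bq : QnRing K P n → QnRing K P n → QnRing K P n) : Prop :=
  (∀ a b : SwapRing K P,
      Bq (toQn K P n a) (toQn K P n b) = toQn K P n (swapBr K P c1 c2 a b)) ∧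
  (∀ a b c : QnRing K P n, Bq (a * b) c = a * Bq b c + b * Bq a c) ∧
  (∀ a b c : QnRing K P n, Bq a (b * c) = b * Bq a c + c * Bq a b)

/-- The `n`-tuple `(x_1, …, x_a, y_1, …, y_b, z_1, …, z_{n-a-b})` built from three
families of points (families are indexed from `0`, i.e. `x 0 = x_1`). -/
def rows3 {α : Type*} {n : ℕ} (x y z : ℕ → α) (a b : ℕ) : Fin n → α :=
  fun i => if (i : ℕ) < a then x (i : ℕ)
    else if (i : ℕ) < a + b then y ((i : ℕ) - a)
    else z ((i : ℕ) - (a + b))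

/-- The `n`-tuple `(x_1, …, x_a, y_1, …, y_b, z_1, …, z_{n-1-a-b}, w)` built from three
families of points and a final point `w`. -/
def rows3s {α : Type*} {n : ℕ} (x y z : ℕ → α) (a b : ℕ) (w : α) : Fin n → α :=
  fun i => if (i : ℕ) < a then x (i : ℕ)
    else if (i : ℕ) < a + b then y ((i : ℕ) - a)
    else if (i : ℕ) < n - 1 then z ((i : ℕ) - (a + b))
    else w

/-- The `n`-tuple `(x_1, …, x_{n-1}, t)`. -/
def snocTup {α : Type*} {n : ℕ} (x : ℕ → α) (t : α) : Fin n → α :=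
  fun i => if (i : ℕ) < n - 1 then x (i : ℕ) else t

/-- The list `f_a, f_{a-1}, …, f_1` (descending enumeration). -/
def descPts (f : ℕ → Circle1) (a : ℕ) : List Circle1 := ((List.range a).map f).reverse

/-- The list `f_1, f_2, …, f_a` (ascending enumeration). -/
def ascPts (f : ℕ → Circle1) (a : ℕ) : List Circle1 := (List.range a).map f

/-- The `(n×n)`-determinant quotient `Δ(numR, v)/Δ(denR, v)` as an element of the total
fraction ring `Q_n(P)`. -/
def EQuot (K : Type) [Field K] (P : Set Circle1) (n : ℕ)
    (numR denR v : Fin n → ↥P)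
    (h : toZn K P n (Dmat K P n denR v) ∈ nonZeroDivisors (ZnRing K P n)) :
    QnRing K P n :=
  Localization.mk (toZn K P n (Dmat K P n numR v)) ⟨toZn K P n (Dmat K P n denR v), h⟩


/-- `p` lies on the right side of the oriented chord from `a` to `b`, where coinciding with
`a` or `b` is allowed: i.e. `p` lies on the closed arc from `a` to `b` in the anticlockwise
direction. -/
def onRightArc (a b p : Circle1) : Prop := p = a ∨ p = b ∨ coordAt a p < coordAt a b

/-- `p` lies strictly on the left side of the oriented chord from `a` to `b`: i.e. `p` lies
on the open arc from `b` to `a` in the anticlockwise direction. -/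
def strictlyLeftArc (a b p : Circle1) : Prop := p ≠ a ∧ p ≠ b ∧ coordAt a b < coordAt a p

/-!
The linking number is a difference: for every cut point, `J(ab, sy) = f(y) - f(s)`, where `f(p)` is
half the orientation sign of the triple `a, b, p`. Changing the cut point multiplies each sign
`△(p - q)` by `η(p) η(q)`, where `η(p) = ±1` records whether `p` passes through the new cut, and
these factors cancel in an orientation sign. Hence `J(ab, sy) = J(ab, su) + J(ab, uy)` for every
point `u`, and `{ab, ·}` sends the entry `x_i y_j` to
`(J(ab, x_i u) + J(ab, u y_j)) · a y_j · x_i b`. In Jacobi's formula for `{ab, det}` the first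
summand reassembles the determinants with `a` in place of some `x_i`, the second those with `b` in
place of some `y_j`. If `u` is strictly left of `ab`, the terms of points strictly left of `ab`
vanish.
-/

lemma coordAt_mem_Ico (o p : Circle1) : coordAt o p ∈ Set.Ico (0 : ℝ) 1 := by
  simpa only [zero_add, coordAt] using ((AddCircle.equivIco (1 : ℝ) 0) (p - o)).2

lemma coe_coordAt (o p : Circle1) : (coordAt o p : Circle1) = p - o :=
  AddCircle.coe_equivIco

lemma coordAt_eq_of_coe_eq {o p : Circle1} {r : ℝ} (hr : r ∈ Set.Ico (0 : ℝ) 1)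
    (h : (r : Circle1) = p - o) : coordAt o p = r := by
  rw [coordAt, ← h]
  exact AddCircle.equivIco_coe_of_mem (by simpa only [zero_add] using hr)

lemma coordAt_self (o : Circle1) : coordAt o o = 0 :=
  coordAt_eq_of_coe_eq ⟨le_rfl, one_pos⟩ (by simp)

lemma coordAt_eq_sub_of_le {o o' p : Circle1} (h : coordAt o o' ≤ coordAt o p) :
    coordAt o' p = coordAt o p - coordAt o o' := by
  have ho' := coordAt_mem_Ico o o'
  have hp := coordAt_mem_Ico o p
  refine coordAt_eq_of_coe_eq ⟨by linarith, by linarith [ho'.1, hp.2]⟩ ?_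
  rw [AddCircle.coe_sub, coe_coordAt, coe_coordAt, sub_sub_sub_cancel_right]

lemma coordAt_eq_sub_add_one_of_lt {o o' p : Circle1} (h : coordAt o p < coordAt o o') :
    coordAt o' p = coordAt o p - coordAt o o' + 1 := by
  have ho' := coordAt_mem_Ico o o'
  have hp := coordAt_mem_Ico o p
  refine coordAt_eq_of_coe_eq ⟨by linarith [ho'.2, hp.1], by linarith⟩ ?_
  rw [AddCircle.coe_add, AddCircle.coe_period, add_zero, AddCircle.coe_sub, coe_coordAt,
    coe_coordAt, sub_sub_sub_cancel_right]

lemma sgnQ_of_neg {r : ℝ} (hr : r < 0) : sgnQ r = -1 := if_pos hr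

lemma sgnQ_zero : sgnQ 0 = 0 := by simp [sgnQ]

lemma sgnQ_of_pos {r : ℝ} (hr : 0 < r) : sgnQ r = 1 := by
  rw [sgnQ, if_neg hr.not_gt, if_neg hr.ne']

/-- The sign `η(p)` by which moving the cut point from `o` to `o'` affects `p`: it is `-1` exactly
when `p` lies on the arc from `o` to `o'`, where the coordinate jumps by `1`. -/
def cutSign (o o' p : Circle1) : ℚ := if coordAt o p < coordAt o o' then -1 else 1

lemma cutSign_mul_self (o o' p : Circle1) : cutSign o o' p * cutSign o o' p = 1 := by
  unfold cutSign
  split_ifs <;> norm_num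

lemma sgnQ_coordAt_sub_coordAt (o o' p q : Circle1) :
    sgnQ (coordAt o' p - coordAt o' q)
      = cutSign o o' p * cutSign o o' q * sgnQ (coordAt o p - coordAt o q) := by
  have hp := coordAt_mem_Ico o p
  have hq := coordAt_mem_Ico o q
  unfold cutSign
  split_ifs with hpo hqo hqo
  · rw [coordAt_eq_sub_add_one_of_lt hpo, coordAt_eq_sub_add_one_of_lt hqo]
    ring_nf
  · rw [coordAt_eq_sub_add_one_of_lt hpo, coordAt_eq_sub_of_le (not_lt.mp hqo),
      sgnQ_of_pos (by linarith [hp.1, hq.2]), sgnQ_of_neg (by linarith)]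
    norm_num
  · rw [coordAt_eq_sub_of_le (not_lt.mp hpo), coordAt_eq_sub_add_one_of_lt hqo,
      sgnQ_of_neg (by linarith [hp.2, hq.1]), sgnQ_of_pos (by linarith)]
    norm_num
  · rw [coordAt_eq_sub_of_le (not_lt.mp hpo), coordAt_eq_sub_of_le (not_lt.mp hqo)]
    ring_nf

/-- The orientation sign of the triple `r, x, p`, in the coordinate obtained by cutting the circle
at `o`; a linking number is half the difference of two of them. -/
def tripleSignAt (o r x p : Circle1) : ℚ :=
  sgnQ (coordAt o r - coordAt o x) * sgnQ (coordAt o r - coordAt o p)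
    * sgnQ (coordAt o p - coordAt o x)

lemma tripleSignAt_eq_tripleSignAt (o o' r x p : Circle1) :
    tripleSignAt o' r x p = tripleSignAt o r x p := by
  simp only [tripleSignAt, sgnQ_coordAt_sub_coordAt o o']
  set ηr := cutSign o o' r
  set ηx := cutSign o o' x
  set ηp := cutSign o o' p
  set s := sgnQ (coordAt o r - coordAt o x)
  set t := sgnQ (coordAt o r - coordAt o p)
  set w := sgnQ (coordAt o p - coordAt o x)
  calc ηr * ηx * s * (ηr * ηp * t) * (ηp * ηx * w)
      = (ηr * ηr) * (ηx * ηx) * (ηp * ηp) * (s * t * w) := by ring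
    _ = s * t * w := by simp only [ηr, ηx, ηp, cutSign_mul_self, one_mul]

lemma linkQ_eq_tripleSignAt_sub (o r x s y : Circle1) :
    linkQ r x s y = 1 / 2 * (tripleSignAt o r x y - tripleSignAt o r x s) := by
  rw [← tripleSignAt_eq_tripleSignAt o (exists_cut r x s y).choose,
    ← tripleSignAt_eq_tripleSignAt o (exists_cut r x s y).choose]
  rfl

lemma linkQ_add_linkQ (r x s u y : Circle1) :
    linkQ r x s u + linkQ r x u y = linkQ r x s y := by
  simp only [linkQ_eq_tripleSignAt_sub r]
  ring

lemma linkQ_self_left (r s y : Circle1) : linkQ r r s y = 0 := by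
  simp [linkQ_eq_tripleSignAt_sub r, tripleSignAt, sgnQ_zero]

lemma linkQ_self_right (r x s : Circle1) : linkQ r x s s = 0 := by
  simp [linkQ_eq_tripleSignAt_sub r]

lemma tripleSignAt_of_strictlyLeftArc {a b p : Circle1} (hp : strictlyLeftArc a b p) :
    tripleSignAt a a b p = -sgnQ (coordAt a a - coordAt a b) := by
  obtain ⟨-, -, hbp⟩ := hp
  have hb := coordAt_mem_Ico a b
  have hap : coordAt a a - coordAt a p < 0 := by linarith [hb.1, coordAt_self a]
  rw [tripleSignAt, sgnQ_of_neg hap, sgnQ_of_pos (sub_pos.mpr hbp)]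
  ring

lemma linkQ_eq_zero_of_strictlyLeftArc {a b s y : Circle1} (hs : strictlyLeftArc a b s)
    (hy : strictlyLeftArc a b y) : linkQ a b s y = 0 := by
  rw [linkQ_eq_tripleSignAt_sub a, tripleSignAt_of_strictlyLeftArc hs,
    tripleSignAt_of_strictlyLeftArc hy, sub_self, mul_zero]

lemma derivation_leibniz_prod {R A M ι : Type*} [CommSemiring R] [CommSemiring A]
    [AddCommMonoid M] [Algebra R A] [Module A M] [Module R M] [DecidableEq ι]
    (D : Derivation R A M) (s : Finset ι) (f : ι → A) :
    D (∏ i ∈ s, f i) = ∑ i ∈ s, (∏ j ∈ s.erase i, f j) • D (f i) := by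
  induction s using Finset.induction_on with
  | empty => simp
  | insert a s ha ih =>
    rw [Finset.prod_insert ha, D.leibniz, ih, Finset.sum_insert ha, Finset.erase_insert ha,
      add_comm, Finset.smul_sum]
    congr 1
    refine Finset.sum_congr rfl fun i hi ↦ ?_
    have hai : a ≠ i := fun h ↦ ha (h ▸ hi)
    rw [Finset.erase_insert_of_ne hai, Finset.prod_insert (by simp [ha]), mul_smul]

section Determinant

variable {R A ι : Type*} [CommRing A] [Fintype ι] [DecidableEq ι]

lemma det_updateRow_eq_sum_adjugate (M : Matrix ι ι A) (i : ι) (v : ι → A) :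
    (M.updateRow i v).det = ∑ j, M.adjugate j i * v j := by
  rw [← Matrix.cramer_transpose_apply, Matrix.cramer_eq_adjugate_mulVec,
    ← Matrix.adjugate_transpose]
  rfl

lemma det_updateCol_eq_sum_adjugate (M : Matrix ι ι A) (j : ι) (w : ι → A) :
    (M.updateCol j w).det = ∑ i, M.adjugate j i * w i := by
  rw [← Matrix.cramer_apply, Matrix.cramer_eq_adjugate_mulVec]
  rfl

variable [CommSemiring R] [Algebra R A]

lemma derivation_det_eq_sum_updateCol (D : Derivation R A A) (M : Matrix ι ι A) :
    D M.det = ∑ j, (M.updateCol j fun i ↦ D (M i j)).det := by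
  simp only [Matrix.det_apply, map_sum]
  rw [Finset.sum_comm]
  refine Finset.sum_congr rfl fun σ _ ↦ ?_
  rw [← Finset.smul_sum, Units.smul_def, map_zsmul, Units.smul_def, derivation_leibniz_prod]
  congr 1
  refine Finset.sum_congr rfl fun j _ ↦ ?_
  rw [← Finset.prod_erase_mul _ _ (Finset.mem_univ j), Matrix.updateCol_self, smul_eq_mul]
  congr 1
  refine Finset.prod_congr rfl fun i hi ↦ ?_
  rw [Matrix.updateCol_ne (Finset.ne_of_mem_erase hi)]

lemma derivation_det_eq_sum_adjugate (D : Derivation R A A) (M : Matrix ι ι A) :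
    D M.det = ∑ j, ∑ i, M.adjugate j i * D (M i j) := by
  simp only [derivation_det_eq_sum_updateCol, det_updateCol_eq_sum_adjugate]

lemma derivation_det_of_apply_eq_smul_mul (D : Derivation R A A) (M : Matrix ι ι A)
    (α β : ι → R) (v w : ι → A) (hD : ∀ i j, D (M i j) = (α i + β j) • (w i * v j)) :
    D M.det = ∑ i, α i • (w i * (M.updateRow i v).det)
      + ∑ j, β j • (v j * (M.updateCol j w).det) := by
  have hrow : ∑ i, α i • (w i * (M.updateRow i v).det)
      = ∑ j, ∑ i, M.adjugate j i * (α i • (w i * v j)) := by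
    rw [Finset.sum_comm]
    refine Finset.sum_congr rfl fun i _ ↦ ?_
    rw [det_updateRow_eq_sum_adjugate, Finset.mul_sum, Finset.smul_sum]
    exact Finset.sum_congr rfl fun j _ ↦ by rw [mul_smul_comm, mul_left_comm]
  have hcol : ∑ j, β j • (v j * (M.updateCol j w).det)
      = ∑ j, ∑ i, M.adjugate j i * (β j • (w i * v j)) := by
    refine Finset.sum_congr rfl fun j _ ↦ ?_
    rw [det_updateCol_eq_sum_adjugate, Finset.mul_sum, Finset.smul_sum]
    exact Finset.sum_congr rfl fun i _ ↦ by rw [mul_smul_comm, mul_left_comm, mul_comm (v j)]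
  simp only [hrow, hcol, derivation_det_eq_sum_adjugate, hD, add_smul, mul_add,
    Finset.sum_add_distrib]

end Determinant

section SwappingBracket

variable {K : Type} [Field K] {P : Set Circle1}

lemma gen_of_ne {a b : P} (hab : a ≠ b) : gen K P a b = X ⟨(a, b), hab⟩ := dif_pos hab

lemma gen_self (a : P) : gen K P a a = 0 := dif_neg (not_not.mpr rfl)

lemma exists_derivation_eq_swapBr (c1 c2 : K) (f : SwapRing K P) :
    ∃ D : Derivation K (SwapRing K P) (SwapRing K P), ⇑D = swapBr K P c1 c2 f := by
  induction f using MvPolynomial.induction_on with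
  | C r => exact ⟨0, funext fun g ↦ by simp [swapBr]⟩
  | add f₁ f₂ ih₁ ih₂ =>
    obtain ⟨D₁, hD₁⟩ := ih₁
    obtain ⟨D₂, hD₂⟩ := ih₂
    exact ⟨D₁ + D₂, funext fun g ↦ by simp [hD₁, hD₂, swapBr]⟩
  | mul_X f i ih =>
    obtain ⟨D, hD⟩ := ih
    exact ⟨f • mkDerivation K (genBr K P c1 c2 i) + (X i : SwapRing K P) • D, funext fun g ↦ by
      rw [Derivation.add_apply, Derivation.smul_apply, Derivation.smul_apply, hD, swapBr, swapBr,
        Derivation.leibniz, mkDerivation_X]⟩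

lemma swapBr_gen_gen (a b s t : P) :
    swapBr K P 1 0 (gen K P a b) (gen K P s t)
      = (linkQ a b s t : K) • (gen K P a t * gen K P s b) := by
  rcases eq_or_ne a b with rfl | hab
  · simp [swapBr, gen_self, linkQ_self_left]
  rcases eq_or_ne s t with rfl | hst
  · simp [swapBr, gen_self, gen_of_ne hab, linkQ_self_right, mkDerivation_X]
  · rw [swapBr, gen_of_ne hab, gen_of_ne hst, mkDerivation_X, mkDerivation_X, genBr, one_smul,
      zero_smul, add_zero]

lemma Dmat_update_left {m : ℕ} (x y : Fin m → P) (d : Fin m) (a : P) :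
    Dmat K P m (Function.update x d a) y
      = ((Matrix.of fun i j ↦ gen K P (x i) (y j)).updateRow d fun j ↦ gen K P a (y j)).det := by
  rw [Dmat]
  congr 1
  ext1 i j
  rcases eq_or_ne i d with rfl | hid
  · simp
  · simp [hid]

lemma Dmat_update_right {m : ℕ} (x y : Fin m → P) (d : Fin m) (b : P) :
    Dmat K P m x (Function.update y d b)
      = ((Matrix.of fun i j ↦ gen K P (x i) (y j)).updateCol d fun i ↦ gen K P (x i) b).det := by
  rw [Dmat]
  congr 1
  ext1 i j
  rcases eq_or_ne j d with rfl | hjd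
  · simp
  · simp [hjd]

variable [CharZero K] {m : ℕ}

lemma swapBr_gen_Dmat (x y : Fin m → P) (a b : P) (u : Circle1) :
    swapBr K P 1 0 (gen K P a b) (Dmat K P m x y)
      = ∑ d, (linkQ a b (x d) u : K) •
          (gen K P (x d) b * Dmat K P m (Function.update x d a) y)
        + ∑ d, (linkQ a b u (y d) : K) •
          (gen K P a (y d) * Dmat K P m x (Function.update y d b)) := by
  obtain ⟨D, hD⟩ := exists_derivation_eq_swapBr 1 0 (gen K P a b)
  simp only [Dmat_update_left, Dmat_update_right]
  rw [← hD, Dmat]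
  refine derivation_det_of_apply_eq_smul_mul D _ _ _ _ _ fun i j ↦ ?_
  rw [hD, Matrix.of_apply, swapBr_gen_gen, ← linkQ_add_linkQ _ _ _ u, Rat.cast_add,
    mul_comm (gen K P a (y j))]

theorem bracket_with_determinant_general (x y : Fin m → P) (a b : P) (S T : Finset (Fin m))
    (hx : ∀ i ∉ S, strictlyLeftArc a b (x i)) (hy : ∀ j ∉ T, strictlyLeftArc a b (y j))
    {u : Circle1} (hu : strictlyLeftArc a b u) :
    swapBr K P 1 0 (gen K P a b) (Dmat K P m x y)
      = ∑ d ∈ S, (linkQ a b (x d) u : K) •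
          (gen K P (x d) b * Dmat K P m (Function.update x d a) y)
        + ∑ d ∈ T, (linkQ a b u (y d) : K) •
          (gen K P a (y d) * Dmat K P m x (Function.update y d b)) := by
  rw [swapBr_gen_Dmat x y a b u]
  congr 1
  · refine (Finset.sum_subset S.subset_univ fun i _ hi ↦ ?_).symm
    rw [linkQ_eq_zero_of_strictlyLeftArc (hx i hi) hu, Rat.cast_zero, zero_smul]
  · refine (Finset.sum_subset T.subset_univ fun j _ hj ↦ ?_).symm
    rw [linkQ_eq_zero_of_strictlyLeftArc hu (hy j hj), Rat.cast_zero, zero_smul]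

end SwappingBracket

/-- The swapping bracket of a generator `ab` with an
`(n+1)×(n+1)` determinant `Δ((x_1,…,x_{n+1}),(y_1,…,y_{n+1}))`, where the `x_i`
(resp. the `y_j`) are pairwise distinct and ordered anticlockwise, exactly
`x_1, …, x_l` and `y_1, …, y_k` lie on the (weak) right side of the oriented chord from
`a` to `b` while the remaining ones lie strictly on its left side, and `u` is any point
strictly on the left side.  (Families are indexed from `0`: `x i` denotes `x_{i+1}`.) -/
theorem bracket_with_determinant (K : Type) [Field K] [CharZero K] (P : Set Circle1)
    (n : ℕ) (hn : 2 ≤ n)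
    (x y : Fin (n+1) → ↥P) (a b : ↥P) (hab : (a : Circle1) ≠ (b : Circle1))
    (hx : AnticlockwiseList (List.ofFn fun i => ((x i : Circle1))))
    (hy : AnticlockwiseList (List.ofFn fun i => ((y i : Circle1))))
    (l k : ℕ) (hl : l ≤ n+1) (hk : k ≤ n+1)
    (hxr : ∀ i : Fin (n+1), (i : ℕ) < l → onRightArc (a : Circle1) (b : Circle1) (x i))
    (hxl : ∀ i : Fin (n+1), l ≤ (i : ℕ) → strictlyLeftArc (a : Circle1) (b : Circle1) (x i))
    (hyr : ∀ i : Fin (n+1), (i : ℕ) < k → onRightArc (a : Circle1) (b : Circle1) (y i))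
    (hyl : ∀ i : Fin (n+1), k ≤ (i : ℕ) → strictlyLeftArc (a : Circle1) (b : Circle1) (y i))
    (u : Circle1) (hu : strictlyLeftArc (a : Circle1) (b : Circle1) u) :
    swapBr K P 1 0 (gen K P a b) (Dmat K P (n+1) x y)
      = (∑ d : Fin (n+1), if (d : ℕ) < l then
            ((linkQ (a : Circle1) (b : Circle1) (x d : Circle1) u : ℚ) : K) •
              (gen K P (x d) b * Dmat K P (n+1) (Function.update x d a) y)
          else 0)
        + (∑ d : Fin (n+1), if (d : ℕ) < k then
            ((linkQ (a : Circle1) (b : Circle1) u (y d : Circle1) : ℚ) : K) •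
              (gen K P a (y d) * Dmat K P (n+1) x (Function.update y d b))
          else 0) := by
  simp only [← Finset.sum_filter]
  exact bracket_with_determinant_general x y a b _ _ (by simpa using hxl) (by simpa using hyl) hu

end
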